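/- arXiv:1511.05910 — 2 statements merged into one kernel-verified Lean document; each statement's English description precedes it below -/
import Mathlib

section
/- (Quantitative version of Lemma 5.5) Let u : Θ → ℝ be bounded and d_p-uniformly continuous with modulus ρ^u. Then there exists a constant C, depending only on T, p and ‖u‖_∞, such that for every n ≥ 1: u(0,0) ≤ u^n(0,0) ≤ u(0,0) + ρ^u( C ( n^{−(3p+3)/2} + n^{−1/(p+1)} ) ), where (0,0) denotes the point of Θ with t = 0 and ω the constant zero path. -/
open MeasureTheory Set Filter Topology

noncomputable section

/-- `ℝ^d` with the Euclidean norm. -/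
abbrev E (d : ℕ) := EuclideanSpace ℝ (Fin d)

/-- A point `θ = (t, ω)` of `Θ = [0,T] × Ω`, where `Ω` is the set of continuous
paths `[0,T] → ℝ^d` starting from the origin. -/
structure Theta (T : ℝ) (d : ℕ) where
  t : ℝ
  path : ℝ → E d
  ht : t ∈ Set.Icc 0 T
  cont : ContinuousOn path (Set.Icc 0 T)
  init : path 0 = 0

/-- `‖f‖_q^q := ‖f T‖^q + ∫_0^T ‖f s‖^q ds`. -/
def pnormPow (T q : ℝ) {d : ℕ} (f : ℝ → E d) : ℝ :=
  ‖f T‖ ^ q + ∫ s in (0:ℝ)..T, ‖f s‖ ^ q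

/-- `‖f‖_q := (‖f T‖^q + ∫_0^T ‖f s‖^q ds)^(1/q)`. -/
def pnorm (T q : ℝ) {d : ℕ} (f : ℝ → E d) : ℝ := (pnormPow T q f) ^ (1 / q)

/-- The pseudo-distance `d_p(θ,θ') = |t - t'| + ‖ω_{t∧·} - ω'_{t'∧·}‖_p`. -/
def dpDist (T p : ℝ) {d : ℕ} (θ θ' : Theta T d) : ℝ :=
  |θ.t - θ'.t| + pnorm T p (fun s => θ.path (min θ.t s) - θ'.path (min θ'.t s))

/-- The set `𝓛_{t,s}` of monotone time changes: for `s > 0`, nondecreasing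
`ℓ : [0,T] → ℝ` restricting to an increasing bijection from `[0,t]` onto `[0,s]`
with `ℓ(r) = r - t + s` on `(t,T]`; for `s = 0` the single function `ℓ^{t,0}`. -/
def LL (T t s : ℝ) : Set (ℝ → ℝ) :=
  if s = 0 then {fun r => if r ≤ t then 0 else r - t}
  else {ℓ | MonotoneOn ℓ (Set.Icc 0 T) ∧ StrictMonoOn ℓ (Set.Icc 0 t) ∧
        Set.BijOn ℓ (Set.Icc 0 t) (Set.Icc 0 s) ∧ ∀ r ∈ Set.Ioc t T, ℓ r = r - t + s}

/-- `‖ℓ - I‖_∞ := sup_{0 ≤ r ≤ T} |ℓ(r) - r|`. -/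
def supId (T : ℝ) (ℓ : ℝ → ℝ) : ℝ := ⨆ r : Set.Icc (0:ℝ) T, |ℓ r - (r : ℝ)|

/-- The penalization `Φ(s,η,θ,ℓ) := ‖ℓ - I‖_∞^{2/(3p+3)} + ‖η_{s∧ℓ(·)} - ω_{t∧·}‖_{p+1}^{p+1}`. -/
def Phi (T p : ℝ) {d : ℕ} (s : ℝ) (η : ℝ → E d) (θ : Theta T d) (ℓ : ℝ → ℝ) : ℝ :=
  (supId T ℓ) ^ (2 / (3 * p + 3)) +
    pnormPow T (p + 1) (fun r => η (min s (ℓ r)) - θ.path (min θ.t r))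

/-- The regularization
`u^n(s,η) := sup { u(θ) - n Φ(s,η,θ,ℓ) : θ ∈ Θ \ {𝟎}, ℓ ∈ 𝓛_{t,s} }`. -/
def reg (T p : ℝ) {d : ℕ} (u : Theta T d → ℝ) (n : ℕ) (s : ℝ) (η : ℝ → E d) : ℝ :=
  sSup { x | ∃ θ : Theta T d, ∃ ℓ : ℝ → ℝ, (θ.t, θ.path) ≠ (0, 0) ∧ ℓ ∈ LL T θ.t s ∧
        x = u θ - (n : ℝ) * Phi T p s η θ ℓ }

/-- A càdlàg path on `[0,T]`: right-continuous with left limits. -/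
def Cadlag (T : ℝ) {d : ℕ} (η : ℝ → E d) : Prop :=
  (∀ x ∈ Set.Ico (0:ℝ) T, ContinuousWithinAt η (Set.Ici x) x) ∧
  (∀ x ∈ Set.Ioc (0:ℝ) T, ∃ l : E d, Filter.Tendsto η (nhdsWithin x (Set.Iio x)) (𝓝 l))

/-- The piecewise constant path `η^{λ_i}(x)_s = Σ_j x_j 1_{{s ≥ s_j}}`. -/
def pcPath {d i : ℕ} (sVec : Fin i → ℝ) (xVec : Fin i → E d) : ℝ → E d :=
  fun r => ∑ j : Fin i, if sVec j ≤ r then xVec j else 0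

lemma aux_int {T : ℝ} {d : ℕ} (θ : Theta T d) (q : ℝ) (hq : 0 ≤ q) :
    IntervalIntegrable (fun s => ‖θ.path (min θ.t s)‖ ^ q) volume 0 T := by
  have h0 := θ.ht
  have hT : 0 ≤ T := h0.1.trans h0.2
  apply ContinuousOn.intervalIntegrable
  rw [Set.uIcc_of_le hT]
  apply ContinuousOn.rpow_const
  · apply ContinuousOn.norm
    apply θ.cont.comp (by fun_prop)
    intro s hs
    exact ⟨le_min h0.1 hs.1, (min_le_left _ _).trans h0.2⟩
  · intro x hx
    exact Or.inr hq

lemma aux_young (p b x : ℝ) (hp : 1 ≤ p) (hb : 0 < b) (hx : 0 ≤ x) :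
    x ^ p ≤ b ^ p + x ^ (p + 1) / b := by
  rcases le_total x b with h | h
  · have h1 : x ^ p ≤ b ^ p := Real.rpow_le_rpow hx h (by linarith)
    have h2 : 0 ≤ x ^ (p + 1) / b := by positivity
    linarith
  · have hx' : 0 < x := hb.trans_le h
    have h1 : 0 ≤ b ^ p := by positivity
    have h2 : x ^ p ≤ x ^ (p + 1) / b := by
      rw [le_div_iff₀ hb, Real.rpow_add_one hx'.ne']
      gcongr
    linarith

lemma aux_nonneg {T q : ℝ} (hT : 0 ≤ T) {d : ℕ} (f : ℝ → E d) : 0 ≤ pnormPow T q f := by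
  unfold pnormPow
  have : 0 ≤ ∫ s in (0:ℝ)..T, ‖f s‖ ^ q :=
    intervalIntegral.integral_nonneg hT (fun _ _ => by positivity)
  positivity

lemma aux_pow {T p b : ℝ} {d : ℕ} (θ : Theta T d) (hp : 1 ≤ p) (hb : 0 < b)
    (h : pnormPow T (p + 1) (fun s => θ.path (min θ.t s)) ≤ b ^ (p + 1)) :
    pnorm T p (fun s => θ.path (min θ.t s)) ≤ (2 + T) * b := by
  have hT : 0 ≤ T := θ.ht.1.trans θ.ht.2
  have h1 : pnormPow T p (fun s => θ.path (min θ.t s)) ≤ (2 + T) * b ^ p := by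
    have hI : ∫ s in (0:ℝ)..T, ‖θ.path (min θ.t s)‖ ^ p ≤
        ∫ s in (0:ℝ)..T, (b ^ p + ‖θ.path (min θ.t s)‖ ^ (p + 1) / b) := by
      apply intervalIntegral.integral_mono_on hT (aux_int θ p (by linarith))
      · exact (intervalIntegrable_const).add ((aux_int θ (p+1) (by linarith)).div_const b)
      · intro x _
        exact aux_young p b _ hp hb (norm_nonneg _)
    rw [intervalIntegral.integral_add intervalIntegrable_const
      ((aux_int θ (p+1) (by linarith)).div_const b), intervalIntegral.integral_div,
      intervalIntegral.integral_const] at hI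
    have hy := aux_young p b _ hp hb (norm_nonneg (θ.path (min θ.t T)))
    have h2 := div_le_div_of_nonneg_right h hb.le
    rw [Real.rpow_add_one hb.ne', mul_div_cancel_right₀ _ hb.ne'] at h2
    unfold pnormPow at h2 ⊢
    rw [add_div] at h2
    simp only [sub_zero, smul_eq_mul] at hI
    linarith
  unfold pnorm
  calc _ ≤ ((2 + T) * b ^ p) ^ (1 / p) :=
        Real.rpow_le_rpow (aux_nonneg hT _) h1 (by positivity)
    _ = (2 + T) ^ (1 / p) * b := by
        rw [Real.mul_rpow (by positivity) (by positivity), ← Real.rpow_mul hb.le,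
          mul_one_div_cancel (by linarith), Real.rpow_one]
    _ ≤ (2 + T) * b := by
        gcongr
        calc (2 + T) ^ (1 / p) ≤ (2 + T) ^ (1:ℝ) := by
              apply Real.rpow_le_rpow_of_exponent_le (by linarith)
              rw [div_le_one (by linarith)]; exact hp
          _ = _ := Real.rpow_one _

lemma aux_sup {T t : ℝ} (ht : t ∈ Set.Icc 0 T) :
    t ≤ supId T (fun r => if r ≤ t then 0 else r - t) := by
  unfold supId
  have hb : BddAbove (Set.range fun r : Set.Icc (0:ℝ) T =>
      |(fun r => if r ≤ t then 0 else r - t) (r:ℝ) - (r : ℝ)|) := by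
    refine ⟨T, ?_⟩
    rintro _ ⟨⟨r, hr⟩, rfl⟩
    simp only
    obtain ⟨h1, h2⟩ := ht
    obtain ⟨h3, h4⟩ := hr
    rw [abs_le]
    split_ifs <;> constructor <;> linarith
  have := le_ciSup hb ⟨t, ht⟩
  simpa [abs_of_nonneg ht.1] using this

lemma aux_sup0 {T : ℝ} :
    supId T (fun r => if r ≤ 0 then 0 else r - 0) = 0 := by
  unfold supId
  have : ∀ r : Set.Icc (0:ℝ) T,
      |(fun r : ℝ => if r ≤ 0 then 0 else r - 0) (r:ℝ) - (r : ℝ)| = 0 := by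
    rintro ⟨r, hr⟩
    simp only
    split_ifs with h
    · have : r = 0 := le_antisymm h hr.1
      simp [this]
    · simp
  simp only [this]
  exact Real.iSup_const_zero

lemma aux_Phi {T p : ℝ} {d : ℕ} (θ : Theta T d) (ℓ : ℝ → ℝ) :
    Phi T p 0 (0 : ℝ → E d) θ ℓ = (supId T ℓ) ^ (2 / (3 * p + 3)) +
      pnormPow T (p + 1) (fun s => θ.path (min θ.t s)) := by
  simp [Phi, pnormPow]

lemma aux_Phi_nonneg {T p : ℝ} {d : ℕ} (θ : Theta T d) (ℓ : ℝ → ℝ) :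
    0 ≤ Phi T p 0 (0 : ℝ → E d) θ ℓ := by
  have hT : 0 ≤ T := θ.ht.1.trans θ.ht.2
  have h1 : 0 ≤ supId T ℓ := Real.iSup_nonneg fun _ => abs_nonneg _
  have h2 := aux_nonneg (q := p + 1) hT (fun s => θ.path (min θ.t s))
  rw [aux_Phi]
  positivity

/-- (Quantitative Lemma 5.5) There is `C > 0`, depending only on `T`, `p` and the
bound `M` on `u`, such that for every `n ≥ 1`:
`u(𝟎) ≤ u^n(𝟎) ≤ u(𝟎) + ρ^u(C (n^{-(3p+3)/2} + n^{-1/(p+1)}))`. -/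
theorem stmt5 (T : ℝ) (hT : 0 < T) (d : ℕ) (hd : 1 ≤ d) (p : ℝ) (hp : 1 ≤ p) (M : ℝ) :
    ∃ C > 0, ∀ u : Theta T d → ℝ, (∀ θ : Theta T d, |u θ| ≤ M) →
    ∀ ρ : ℝ → ℝ, Monotone ρ →
      Filter.Tendsto ρ (nhdsWithin 0 (Set.Ioi 0)) (𝓝 0) →
      (∀ θ θ' : Theta T d, |u θ - u θ'| ≤ ρ (dpDist T p θ θ')) →
    ∀ n : ℕ, 1 ≤ n →
      u ⟨0, 0, ⟨le_rfl, hT.le⟩, continuousOn_const, rfl⟩ ≤ reg T p u n 0 (0 : ℝ → E d) ∧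
      reg T p u n 0 (0 : ℝ → E d) ≤ u ⟨0, 0, ⟨le_rfl, hT.le⟩, continuousOn_const, rfl⟩
        + ρ (C * ((n : ℝ) ^ (-((3 * p + 3) / 2)) + (n : ℝ) ^ (-(1 / (p + 1))))) := by
  set K : ℝ := 2 * |M| + 1 with hK
  have hK0 : 0 < K := by positivity
  refine ⟨K ^ ((3 * p + 3) / 2) + (2 + T) * K ^ (1 / (p + 1)), by positivity, ?_⟩
  intro u hu ρ hρ hρ0 hur n hn
  have hn0 : (0:ℝ) < n := by exact_mod_cast hn
  set z : Theta T d := ⟨0, 0, ⟨le_rfl, hT.le⟩, continuousOn_const, rfl⟩ with hz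
  have hp0 : p ≠ 0 := by linarith
  have hzt : ∀ θ : Theta T d, dpDist T p θ z = θ.t + pnorm T p (fun s => θ.path (min θ.t s)) := by
    intro θ
    simp [dpDist, hz, abs_of_nonneg θ.ht.1]
  have hpn0 : pnorm T p (fun _ => (0 : E d)) = 0 := by
    simp [pnorm, pnormPow, Real.zero_rpow hp0, Real.zero_rpow (inv_ne_zero hp0)]
  have hρle : ρ 0 ≤ 0 := by
    apply ge_of_tendsto hρ0
    filter_upwards [self_mem_nhdsWithin] with x hx
    exact hρ (le_of_lt hx)
  have hρge : 0 ≤ ρ 0 := by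
    have := hur z z
    rw [hzt] at this
    simpa [hz, hpn0] using this
  -- a nonzero point at time zero
  let e : E d := EuclideanSpace.single ⟨0, hd⟩ 1
  have he : e ≠ 0 := by
    intro h
    have := congrArg norm h
    simp [e] at this
  let w : Theta T d := ⟨0, fun s => s • e, ⟨le_rfl, hT.le⟩, by fun_prop, by simp⟩
  have hwpath : (fun s => w.path (min w.t s)) = fun s => min 0 s • e := rfl
  have hw0 : ∀ s ∈ Set.Icc 0 T, w.path (min w.t s) = 0 := by
    intro s hs
    simp [w, hs.1]
  have hwpow : ∀ q : ℝ, q ≠ 0 → pnormPow T q (fun s => w.path (min w.t s)) = 0 := by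
    intro q hq
    unfold pnormPow
    have : ∫ s in (0:ℝ)..T, ‖w.path (min w.t s)‖ ^ q = ∫ s in (0:ℝ)..T, (0:ℝ) := by
      apply intervalIntegral.integral_congr
      intro s hs
      rw [Set.uIcc_of_le hT.le] at hs
      simp only [hw0 s hs, norm_zero, Real.zero_rpow hq]
    rw [this]
    beta_reduce
    rw [hw0 T ⟨hT.le, le_rfl⟩]
    simp [Real.zero_rpow hq]
  have huw : u z ≤ u w := by
    have h := hur w z
    rw [hzt] at h
    have : w.t + pnorm T p (fun s => w.path (min w.t s)) = 0 := by
      unfold pnorm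
      rw [hwpow p hp0, Real.zero_rpow (by positivity)]
      simp [w]
    rw [this] at h
    have := (abs_le.1 h).1
    linarith
  have hmem : u w ∈ { x | ∃ θ : Theta T d, ∃ ℓ : ℝ → ℝ, (θ.t, θ.path) ≠ (0, 0) ∧
      ℓ ∈ LL T θ.t 0 ∧ x = u θ - (n : ℝ) * Phi T p 0 (0 : ℝ → E d) θ ℓ } := by
    refine ⟨w, fun r => if r ≤ 0 then 0 else r - 0, ?_, ?_, ?_⟩
    · intro h
      have h2 := congrFun (Prod.ext_iff.1 h).2 1
      apply he
      simpa [w] using h2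
    · simp [LL, w]
    · rw [aux_Phi, aux_sup0, hwpow (p + 1) (by linarith), Real.zero_rpow (by positivity)]
      simp
  constructor
  · refine huw.trans (le_csSup ⟨M, ?_⟩ hmem)
    rintro x ⟨θ, ℓ, -, -, rfl⟩
    have h1 := (abs_le.1 (hu θ)).2
    have h2 := mul_nonneg hn0.le (aux_Phi_nonneg (p := p) θ ℓ)
    linarith
  · apply csSup_le ⟨_, hmem⟩
    rintro x ⟨θ, ℓ, -, hℓ, rfl⟩
    have hΦ := mul_nonneg hn0.le (aux_Phi_nonneg (p := p) θ ℓ)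
    by_cases hc : u θ - (n : ℝ) * Phi T p 0 (0 : ℝ → E d) θ ℓ ≤ u z
    · have : ρ 0 ≤ ρ ((K ^ ((3 * p + 3) / 2) + (2 + T) * K ^ (1 / (p + 1))) *
          ((n : ℝ) ^ (-((3 * p + 3) / 2)) + (n : ℝ) ^ (-(1 / (p + 1))))) :=
        hρ (by positivity)
      linarith
    · push Not at hc
      have h1 := (abs_le.1 (hu θ)).2
      have h2 := (abs_le.1 (hu z)).1
      have h3 := le_abs_self M
      have h4 : Phi T p 0 (0 : ℝ → E d) θ ℓ ≤ K / n := by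
        rw [le_div_iff₀ hn0]
        linarith
      rw [aux_Phi] at h4
      have hs0 : 0 ≤ supId T ℓ := Real.iSup_nonneg fun _ => abs_nonneg _
      have h5 : 0 ≤ supId T ℓ ^ (2 / (3 * p + 3)) := by positivity
      have h6 := aux_nonneg (q := p + 1) hT.le (fun s => θ.path (min θ.t s))
      have hts : θ.t ≤ supId T ℓ := by
        simp only [LL, if_true, Set.mem_singleton_iff] at hℓ
        rw [hℓ]
        exact aux_sup θ.ht
      have ht : θ.t ≤ K ^ ((3 * p + 3) / 2) * (n : ℝ) ^ (-((3 * p + 3) / 2)) := by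
        have h7 : (supId T ℓ ^ (2 / (3 * p + 3))) ^ ((3 * p + 3) / 2) ≤
            (K / n) ^ ((3 * p + 3) / 2) :=
          Real.rpow_le_rpow h5 (by linarith) (by positivity)
        rw [← Real.rpow_mul hs0, show 2 / (3 * p + 3) * ((3 * p + 3) / 2) = 1 by field_simp,
          Real.rpow_one, Real.div_rpow hK0.le hn0.le, div_eq_mul_inv,
          ← Real.rpow_neg hn0.le] at h7
        exact hts.trans h7
      have hb : pnorm T p (fun s => θ.path (min θ.t s)) ≤
          (2 + T) * (K ^ (1 / (p + 1)) * (n : ℝ) ^ (-(1 / (p + 1)))) := by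
        apply aux_pow θ hp (by positivity)
        rw [Real.rpow_neg hn0.le, ← div_eq_mul_inv, ← Real.div_rpow hK0.le hn0.le,
          ← Real.rpow_mul (by positivity), one_div_mul_cancel (by linarith), Real.rpow_one]
        linarith
      have hd' : dpDist T p θ z ≤ (K ^ ((3 * p + 3) / 2) + (2 + T) * K ^ (1 / (p + 1))) *
          ((n : ℝ) ^ (-((3 * p + 3) / 2)) + (n : ℝ) ^ (-(1 / (p + 1)))) := by
        rw [hzt]
        have e1 : 0 ≤ K ^ ((3 * p + 3) / 2) * (n : ℝ) ^ (-(1 / (p + 1))) := by positivity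
        have e2 : 0 ≤ (2 + T) * K ^ (1 / (p + 1)) * (n : ℝ) ^ (-((3 * p + 3) / 2)) := by
          positivity
        linarith
      have h8 := (le_abs_self _).trans ((hur θ z).trans (hρ hd'))
      linarith
end
end

section
/- (Lemma 5.6) Let u : Θ → ℝ be bounded and d_p-uniformly continuous. Then ρ_n := sup{ |u^{n,λ_i}(T,x) − u^{λ_i}(T,x)| } → 0 as n → ∞, where the supremum is taken over all i ≤ n^{1+1/(5p)}, all partitions 0 = s_1 < ⋯ < s_i ≤ T, and all x_1,…,x_{i−1}, x ∈ ℝ^d such that |x_i|_p ≤ n^{1/2 + 6/(5p)} with x_i := (x_1,…,x_{i−1},x). -/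
open MeasureTheory Set Filter Topology

noncomputable section

/-- `L = u^{λ_i}(T,x)`, i.e. `L` is the limit of `u(T, ω^k)` along a sequence of
continuous paths `ω^k ∈ Ω` with `‖η^{λ_i}(x) - ω^k‖_p → 0`. -/
def IsExtValue (T p : ℝ) {d : ℕ} (u : Theta T d → ℝ) (η : ℝ → E d) (L : ℝ) : Prop :=
  ∃ θk : ℕ → Theta T d, (∀ k, (θk k).t = T) ∧
    Filter.Tendsto (fun k => pnorm T p (fun r => η r - (θk k).path r)) Filter.atTop (𝓝 0) ∧
    Filter.Tendsto (fun k => u (θk k)) Filter.atTop (𝓝 L)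


structure Nice (T : ℝ) {d : ℕ} (f : ℝ → E d) : Prop where
  meas : AEStronglyMeasurable f (volume.restrict (Ioc 0 T))
  bdd : ∃ C : ℝ, ∀ r ∈ Icc 0 T, ‖f r‖ ≤ C

theorem Nice.sub {T : ℝ} {d : ℕ} {f g : ℝ → E d} (hf : Nice T f) (hg : Nice T g) :
    Nice T (fun r => f r - g r) := by
  refine ⟨hf.meas.sub hg.meas, ?_⟩
  obtain ⟨C, hC⟩ := hf.bdd
  obtain ⟨D, hD⟩ := hg.bdd
  exact ⟨C + D, fun r hr => (norm_sub_le _ _).trans (add_le_add (hC r hr) (hD r hr))⟩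

theorem Nice.int {T : ℝ} {d : ℕ} {f : ℝ → E d} (hf : Nice T f) {q : ℝ} (hq : 0 ≤ q) :
    IntegrableOn (fun r => ‖f r‖ ^ q) (Ioc 0 T) := by
  obtain ⟨C, hC⟩ := hf.bdd
  refine Integrable.of_bound ?_ (C ^ q) ?_
  · exact (hf.meas.norm.aemeasurable.pow_const q).aestronglyMeasurable
  · refine (ae_restrict_iff' measurableSet_Ioc).2 (Eventually.of_forall fun r hr => ?_)
    rw [Real.norm_of_nonneg (by positivity)]
    exact Real.rpow_le_rpow (norm_nonneg _) (hC r ⟨hr.1.le, hr.2⟩) hq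

theorem pnormPow_eq {T : ℝ} (hT : 0 < T) (q : ℝ) {d : ℕ} (f : ℝ → E d) :
    pnormPow T q f = ‖f T‖ ^ q + ∫ s in Ioc 0 T, ‖f s‖ ^ q := by
  rw [pnormPow, intervalIntegral.integral_of_le hT.le]

theorem pnormPow_nonneg {T : ℝ} (hT : 0 < T) (q : ℝ) {d : ℕ} (f : ℝ → E d) :
    0 ≤ pnormPow T q f := by
  rw [pnormPow_eq hT]
  have : 0 ≤ ∫ s in Ioc 0 T, ‖f s‖ ^ q := integral_nonneg fun _ => by positivity
  positivity

theorem add_rpow_crude {a b p : ℝ} (ha : 0 ≤ a) (hb : 0 ≤ b) (hp : 0 ≤ p) :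
    (a + b) ^ p ≤ 2 ^ p * (a ^ p + b ^ p) := by
  have h1 : (a + b) ^ p ≤ (2 * max a b) ^ p := by
    apply Real.rpow_le_rpow (by positivity) _ hp
    linarith [le_max_left a b, le_max_right a b]
  rw [Real.mul_rpow (by norm_num) (le_max_of_le_left ha)] at h1
  refine h1.trans (mul_le_mul_of_nonneg_left ?_ (by positivity))
  have := Real.rpow_nonneg ha p
  have := Real.rpow_nonneg hb p
  rcases max_choice a b with h | h <;> rw [h] <;> linarith

theorem pnormPow_tri {T : ℝ} (hT : 0 < T) {p : ℝ} (hp : 0 ≤ p) {d : ℕ} {f g h : ℝ → E d}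
    (hf : Nice T f) (hg : Nice T g) (hh : ∀ r ∈ Icc 0 T, ‖h r‖ ≤ ‖f r‖ + ‖g r‖) :
    pnormPow T p h ≤ 2 ^ p * (pnormPow T p f + pnormPow T p g) := by
  have key : ∀ r ∈ Icc 0 T, ‖h r‖ ^ p ≤ 2 ^ p * (‖f r‖ ^ p + ‖g r‖ ^ p) := fun r hr =>
    (Real.rpow_le_rpow (norm_nonneg _) (hh r hr) hp).trans
      (add_rpow_crude (norm_nonneg _) (norm_nonneg _) hp)
  have hi : ∫ s in Ioc 0 T, ‖h s‖ ^ p ≤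
      2 ^ p * ((∫ s in Ioc 0 T, ‖f s‖ ^ p) + ∫ s in Ioc 0 T, ‖g s‖ ^ p) := by
    rw [← integral_add (hf.int hp) (hg.int hp), ← integral_const_mul]
    refine integral_mono_of_nonneg (Eventually.of_forall fun _ => by positivity)
      (((hf.int hp).add (hg.int hp)).const_mul _) ?_
    exact (ae_restrict_iff' measurableSet_Ioc).2 (Eventually.of_forall fun r hr =>
      key r ⟨hr.1.le, hr.2⟩)
  rw [pnormPow_eq hT, pnormPow_eq hT, pnormPow_eq hT]
  have := key T ⟨hT.le, le_rfl⟩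
  linarith

theorem pow_interp {a c p : ℝ} (ha : 0 ≤ a) (hc : 0 < c) (hp : 0 ≤ p) :
    a ^ p ≤ c ^ p + c⁻¹ * a ^ (p + 1) := by
  have h1 := Real.rpow_nonneg ha (p + 1)
  have h2 := Real.rpow_nonneg hc.le p
  rcases le_or_gt a c with h | h
  · have := Real.rpow_le_rpow ha h hp
    have : 0 ≤ c⁻¹ * a ^ (p + 1) := by positivity
    linarith
  · have ha' : 0 < a := hc.trans h
    rw [Real.rpow_add_one ha'.ne']
    have : a ^ p ≤ c⁻¹ * (a ^ p * a) := by
      rw [inv_mul_eq_div, le_div_iff₀ hc]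
      exact mul_le_mul_of_nonneg_left h.le (by positivity)
    linarith

theorem pnormPow_interp {T : ℝ} (hT : 0 < T) {p : ℝ} (hp : 0 ≤ p) {d : ℕ} {f : ℝ → E d}
    (hf : Nice T f) {c : ℝ} (hc : 0 < c) :
    pnormPow T p f ≤ (1 + T) * c ^ p + c⁻¹ * pnormPow T (p + 1) f := by
  have hi : ∫ s in Ioc 0 T, ‖f s‖ ^ p ≤
      T * c ^ p + c⁻¹ * ∫ s in Ioc 0 T, ‖f s‖ ^ (p + 1) := by
    have e : T * c ^ p = ∫ s in Ioc 0 T, c ^ p := by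
      simp [hT.le]
    rw [e, ← integral_const_mul, ← integral_add (by simp)
      ((hf.int (by linarith)).const_mul _)]
    refine integral_mono (hf.int hp) (Integrable.add (by simp)
      ((hf.int (by linarith)).const_mul _)) fun r => ?_
    exact pow_interp (norm_nonneg _) hc hp
  rw [pnormPow_eq hT, pnormPow_eq hT]
  have := pow_interp (norm_nonneg (f T)) hc hp
  linarith

theorem Theta.nice {T : ℝ} {d : ℕ} (hT : 0 < T) (θ : Theta T d) :
    Nice T (fun r => θ.path (min θ.t r)) := by
  have hm : MapsTo (fun r => min θ.t r) (Icc 0 T) (Icc 0 T) := fun r hr =>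
    ⟨le_min θ.ht.1 hr.1, (min_le_right _ _).trans hr.2⟩
  have hc : ContinuousOn (fun r => θ.path (min θ.t r)) (Icc 0 T) :=
    θ.cont.comp (by fun_prop) hm
  refine ⟨?_, ?_⟩
  · exact (hc.mono Ioc_subset_Icc_self).aestronglyMeasurable measurableSet_Ioc
  · exact isCompact_Icc.exists_bound_of_continuousOn hc

theorem Theta.nice' {T : ℝ} {d : ℕ} (θ : Theta T d) : Nice T θ.path := by
  refine ⟨?_, ?_⟩
  · exact (θ.cont.mono Ioc_subset_Icc_self).aestronglyMeasurable measurableSet_Ioc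
  · exact isCompact_Icc.exists_bound_of_continuousOn θ.cont

theorem pc_bdd {d i : ℕ} (sVec : Fin i → ℝ) (xVec : Fin i → E d) (r : ℝ) :
    ‖pcPath sVec xVec r‖ ≤ ∑ j, ‖xVec j‖ := by
  refine (norm_sum_le _ _).trans (Finset.sum_le_sum fun j _ => ?_)
  split_ifs <;> simp

theorem pc_meas {d i : ℕ} (sVec : Fin i → ℝ) (xVec : Fin i → E d) :
    Measurable (pcPath sVec xVec) := by
  unfold pcPath
  refine Finset.measurable_sum _ fun j _ => ?_
  exact Measurable.ite measurableSet_Ici measurable_const measurable_const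

theorem pc_nice {T : ℝ} {d i : ℕ} (sVec : Fin i → ℝ) (xVec : Fin i → E d) :
    Nice T (pcPath sVec xVec) :=
  ⟨(pc_meas _ _).aestronglyMeasurable, _, fun r _ => pc_bdd _ _ r⟩

theorem pc_comp_nice {T : ℝ} {d i : ℕ} (sVec : Fin i → ℝ) (xVec : Fin i → E d)
    {ℓ : ℝ → ℝ} (hl : MonotoneOn ℓ (Icc 0 T)) :
    Nice T (fun r => pcPath sVec xVec (min T (ℓ r))) := by
  refine ⟨?_, _, fun r _ => pc_bdd _ _ _⟩
  have h1 : AEMeasurable ℓ (volume.restrict (Ioc 0 T)) :=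
    aemeasurable_restrict_of_monotoneOn measurableSet_Ioc (hl.mono Ioc_subset_Icc_self)
  exact ((pc_meas _ _).comp_aemeasurable (aemeasurable_const.min h1)).aestronglyMeasurable

theorem close_lemma (T : ℝ) (hT : 0 < T) (d : ℕ) (p : ℝ) (hp : 1 ≤ p)
    (u : Theta T d → ℝ) 
    (ρ : ℝ → ℝ) (hmono : Monotone ρ)
    (hρ0 : Filter.Tendsto ρ (nhdsWithin 0 (Set.Ioi 0)) (𝓝 0))
    (huc : ∀ θ θ' : Theta T d, |u θ - u θ'| ≤ ρ (dpDist T p θ θ')) (ε : ℝ) (hε : 0 < ε) :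
    ∃ κ > 0, ∀ (θ : Theta T d) (η : ℝ → E d) (L : ℝ), Nice T η → IsExtValue T p u η L →
      |θ.t - T| ≤ κ → pnormPow T p (fun r => θ.path (min θ.t r) - η r) ≤ κ →
      |u θ - L| ≤ ε := by
  have hp0 : 0 < p := by linarith
  obtain ⟨δ, hδρ, hδ⟩ : ∃ δ, ρ δ < ε ∧ 0 < δ :=
    ((hρ0.eventually (gt_mem_nhds hε)).and self_mem_nhdsWithin).exists
  have hκ : 0 < (δ / 2) ^ p / 2 ^ (p + 1) := by positivity
  refine ⟨min (δ / 2) ((δ / 2) ^ p / 2 ^ (p + 1)), by positivity, ?_⟩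
  rintro θ η L hη ⟨θk, hk1, hk2, hk3⟩ ht hP
  refine le_of_tendsto ((tendsto_const_nhds.sub hk3).abs) ?_
  have hev : ∀ᶠ k in atTop, pnorm T p (fun r => η r - (θk k).path r) <
      ((δ / 2) ^ p / 2 ^ (p + 1)) ^ (1 / p) :=
    hk2.eventually (gt_mem_nhds (by positivity))
  filter_upwards [hev] with k hk
  refine (huc _ _).trans ((hmono ?_).trans hδρ.le)
  have hk' : pnormPow T p (fun r => η r - (θk k).path r) ≤ (δ / 2) ^ p / 2 ^ (p + 1) := by
    unfold pnorm at hk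
    exact ((Real.rpow_lt_rpow_iff (pnormPow_nonneg hT _ _) hκ.le (by positivity)).1 hk).le
  have htri : pnormPow T p
      (fun s => θ.path (min θ.t s) - (θk k).path (min (θk k).t s)) ≤ (δ / 2) ^ p := by
    have := pnormPow_tri hT hp0.le (h := fun s => θ.path (min θ.t s) - (θk k).path (min (θk k).t s))
      ((θ.nice hT).sub hη) (hη.sub (θk k).nice') ?_
    · refine this.trans ?_
      calc _ ≤ 2 ^ p * ((δ / 2) ^ p / 2 ^ (p + 1) + (δ / 2) ^ p / 2 ^ (p + 1)) := by
            gcongr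
            exact hP.trans (min_le_right _ _)
        _ = _ := by
            rw [Real.rpow_add_one (by norm_num)]
            field_simp
            ring
    · intro r hr
      rw [hk1, min_eq_right hr.2]
      simpa using norm_add_le (θ.path (min θ.t r) - η r) (η r - (θk k).path r)
  unfold dpDist pnorm
  have h3 := Real.rpow_le_rpow (pnormPow_nonneg hT _ _) htri (z := 1 / p) (by positivity)
  rw [← Real.rpow_mul (by positivity), mul_one_div_cancel hp0.ne', Real.rpow_one] at h3
  rw [hk1] at h3 ⊢
  have := ht.trans (min_le_left _ _)
  linarith

/-- approximating scalar ramps -/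
def ramp (k : ℕ) (s r : ℝ) : ℝ := max 0 (min 1 (k * (r - s) + 1)) * max 0 (min 1 (k * r))

theorem ramp_mem (k : ℕ) (s r : ℝ) : 0 ≤ ramp k s r ∧ ramp k s r ≤ 1 := by
  have h (x : ℝ) : 0 ≤ max 0 (min 1 x) ∧ max 0 (min 1 x) ≤ 1 :=
    ⟨le_max_left _ _, max_le zero_le_one (min_le_left _ _)⟩
  unfold ramp
  exact ⟨mul_nonneg (h _).1 (h _).1, mul_le_one₀ (h _).2 (h _).1 (h _).2⟩

theorem ramp_tendsto (s r : ℝ) (hr : 0 < r) :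
    ∀ᶠ k : ℕ in atTop, ramp k s r = if s ≤ r then 1 else 0 := by
  have h1 : ∀ᶠ k : ℕ in atTop, 1 ≤ (k : ℝ) * r := by
    have : Tendsto (fun k : ℕ => (k : ℝ) * r) atTop atTop :=
      tendsto_natCast_atTop_atTop.atTop_mul_const hr
    exact this.eventually_ge_atTop 1
  split_ifs with h
  · filter_upwards [h1] with k hk
    have : 0 ≤ (k : ℝ) * (r - s) := mul_nonneg k.cast_nonneg (by linarith)
    unfold ramp
    rw [min_eq_left (by linarith), min_eq_left hk]
    simp
  · have h2 : ∀ᶠ k : ℕ in atTop, 1 ≤ (k : ℝ) * (s - r) := by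
      have : Tendsto (fun k : ℕ => (k : ℝ) * (s - r)) atTop atTop :=
        tendsto_natCast_atTop_atTop.atTop_mul_const (by linarith)
      exact this.eventually_ge_atTop 1
    filter_upwards [h2] with k hk
    unfold ramp
    rw [max_eq_left (a := (0:ℝ)) (b := min 1 ((k:ℝ) * (r - s) + 1)), zero_mul]
    exact (min_le_right _ _).trans (by linarith)

def rampPath {d i : ℕ} (sVec : Fin i → ℝ) (xVec : Fin i → E d) (k : ℕ) : ℝ → E d :=
  fun r => ∑ j, ramp k (sVec j) r • xVec j

def rampTheta {T : ℝ} (hT : 0 < T) {d i : ℕ} (sVec : Fin i → ℝ) (xVec : Fin i → E d) (k : ℕ) :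
    Theta T d where
  t := T
  path := rampPath sVec xVec k
  ht := ⟨hT.le, le_rfl⟩
  cont := by
    unfold rampPath ramp
    fun_prop
  init := by simp [rampPath, ramp]

theorem ramp_bdd {d i : ℕ} (sVec : Fin i → ℝ) (xVec : Fin i → E d) (k : ℕ) (r : ℝ) :
    ‖rampPath sVec xVec k r‖ ≤ ∑ j, ‖xVec j‖ := by
  refine (norm_sum_le _ _).trans (Finset.sum_le_sum fun j _ => ?_)
  obtain ⟨h0, h1⟩ := ramp_mem k (sVec j) r
  rw [norm_smul, Real.norm_of_nonneg h0]
  exact mul_le_of_le_one_left (norm_nonneg _) h1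

theorem rampPath_ev {d i : ℕ} (sVec : Fin i → ℝ) (xVec : Fin i → E d) (r : ℝ) (hr : 0 < r) :
    ∀ᶠ k in atTop, rampPath sVec xVec k r = pcPath sVec xVec r := by
  have : ∀ᶠ k in atTop, ∀ j, ramp k (sVec j) r = if sVec j ≤ r then 1 else 0 :=
    eventually_all.2 fun j => ramp_tendsto _ _ hr
  filter_upwards [this] with k hk
  unfold rampPath pcPath
  refine Finset.sum_congr rfl fun j _ => ?_
  rw [hk]
  split_ifs <;> simp

theorem ramp_conv {T : ℝ} (hT : 0 < T) {d i : ℕ} (sVec : Fin i → ℝ) (xVec : Fin i → E d)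
    {q : ℝ} (hq : 0 < q) :
    Tendsto (fun k => pnormPow T q (fun r => pcPath sVec xVec r - rampPath sVec xVec k r))
      atTop (𝓝 0) := by
  have hpt : ∀ r, 0 < r → Tendsto
      (fun k => ‖pcPath sVec xVec r - rampPath sVec xVec k r‖ ^ q) atTop (𝓝 0) := by
    intro r hr
    refine Tendsto.congr' ?_ tendsto_const_nhds
    filter_upwards [rampPath_ev sVec xVec r hr] with k hk
    simp [hk, hq.ne']
  simp only [pnormPow_eq hT]
  have e0 : (0:ℝ) + ∫ s in Ioc 0 T, (0:ℝ) = 0 := by simp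
  refine Tendsto.mono_right ((hpt T hT).add (b := ∫ s in Ioc 0 T, (0:ℝ)) ?_) (by rw [e0])
  refine tendsto_integral_of_dominated_convergence
    (fun _ => (∑ j, ‖xVec j‖ + ∑ j, ‖xVec j‖) ^ q) ?_ ?_ ?_ ?_
  · intro k
    exact (((pc_nice (T := T) sVec xVec).sub (rampTheta hT sVec xVec k).nice').int hq.le).1
  · exact integrable_const _
  · intro k
    refine Eventually.of_forall fun r => ?_
    rw [Real.norm_of_nonneg (by positivity)]
    exact Real.rpow_le_rpow (norm_nonneg _) ((norm_sub_le _ _).trans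
      (add_le_add (pc_bdd _ _ _) (ramp_bdd _ _ _ _))) hq.le
  · exact (ae_restrict_iff' measurableSet_Ioc).2 (Eventually.of_forall fun r hr => hpt r hr.1)

theorem id_mem_LL {T : ℝ} (hT : 0 < T) : (fun r : ℝ => r) ∈ LL T T T := by
  unfold LL
  rw [if_neg hT.ne']
  refine ⟨fun _ _ _ _ h => h, fun _ _ _ _ h => h, bijOn_id _, fun r hr => by ring⟩

theorem supId_nonneg (T : ℝ) (ℓ : ℝ → ℝ) : 0 ≤ supId T ℓ :=
  Real.iSup_nonneg fun _ => abs_nonneg _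

theorem Phi_nonneg {T : ℝ} (hT : 0 < T) (p : ℝ) {d : ℕ} (s : ℝ) (η : ℝ → E d) (θ : Theta T d)
    (ℓ : ℝ → ℝ) : 0 ≤ Phi T p s η θ ℓ :=
  add_nonneg (Real.rpow_nonneg (supId_nonneg _ _) _) (pnormPow_nonneg hT _ _)

theorem pnormPow_congr {T : ℝ} (hT : 0 < T) (q : ℝ) {d : ℕ} {f g : ℝ → E d}
    (h : ∀ r ∈ Icc 0 T, ‖f r‖ = ‖g r‖) : pnormPow T q f = pnormPow T q g := by
  rw [pnormPow_eq hT, pnormPow_eq hT, h T ⟨hT.le, le_rfl⟩]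
  congr 1
  exact setIntegral_congr_fun measurableSet_Ioc fun r hr => by
    simp only [h r ⟨hr.1.le, hr.2⟩]

/-- time change facts -/
theorem LL_facts {T t : ℝ} (hT : 0 < T) (ht : t ∈ Icc 0 T) {ℓ : ℝ → ℝ} (hl : ℓ ∈ LL T t T) :
    MonotoneOn ℓ (Icc 0 T) ∧ T ≤ ℓ T ∧ |t - T| ≤ supId T ℓ ∧
      ∀ r ∈ Icc 0 T, |ℓ r - r| ≤ supId T ℓ := by
  unfold LL at hl
  rw [if_neg hT.ne'] at hl
  obtain ⟨hm, hs, hb, hr⟩ := hl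
  have hlt : ℓ t = T := by
    obtain ⟨y, hy, hyT⟩ := hb.surjOn (right_mem_Icc.2 hT.le)
    have h1 := (hb.mapsTo (right_mem_Icc.2 ht.1)).2
    have h2 := hs.monotoneOn hy (right_mem_Icc.2 ht.1) hy.2
    linarith
  have hbd : ∀ r ∈ Icc 0 T, |ℓ r - r| ≤ supId T ℓ := by
    intro r hrT
    refine le_ciSup (f := fun r : Icc (0:ℝ) T => |ℓ r - (r:ℝ)|) ?_ ⟨r, hrT⟩
    refine ⟨T, ?_⟩
    rintro _ ⟨⟨y, hy⟩, rfl⟩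
    simp only
    rcases le_or_gt y t with h | h
    · have := hb.mapsTo ⟨hy.1, h⟩
      rw [abs_le]
      constructor <;> linarith [this.1, this.2, hy.1, hy.2]
    · rw [hr y ⟨h, hy.2⟩, abs_le]
      constructor <;> linarith [ht.1, ht.2]
  refine ⟨hm, ?_, ?_, hbd⟩
  · rw [← hlt]
    rw [hlt]
    have := hm ht (right_mem_Icc.2 hT.le) ht.2
    linarith
  · have := hbd t ht
    rwa [hlt, abs_sub_comm] at this

theorem timechange_bound {T : ℝ} (hT : 0 < T) {p : ℝ} (hp : 1 ≤ p) {d m : ℕ}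
    (sVec : Fin (m + 1) → ℝ) (xVec : Fin (m + 1) → E d) (hs : ∀ j, sVec j ≤ T)
    {ℓ : ℝ → ℝ} {δ : ℝ} (hδ : 0 ≤ δ) (hlT : T ≤ ℓ T) (hl : ∀ r ∈ Icc 0 T, |ℓ r - r| ≤ δ) :
    pnormPow T p (fun r => pcPath sVec xVec (min T (ℓ r)) - pcPath sVec xVec r) ≤
      ((m : ℝ) + 1) ^ (p - 1) * ((∑ j, ‖xVec j‖ ^ p) * (2 * δ)) := by
  have hp0 : 0 < p := by linarith
  have key : ∀ r ∈ Icc 0 T, ‖pcPath sVec xVec (min T (ℓ r)) - pcPath sVec xVec r‖ ^ p ≤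
      ((m : ℝ) + 1) ^ (p - 1) *
        ∑ j, (Icc (sVec j - δ) (sVec j + δ)).indicator (fun _ => ‖xVec j‖ ^ p) r := by
    intro r hr
    have h1 : ‖pcPath sVec xVec (min T (ℓ r)) - pcPath sVec xVec r‖ ≤
        ∑ j, |(Icc (sVec j - δ) (sVec j + δ)).indicator (fun _ => ‖xVec j‖) r| := by
      unfold pcPath
      rw [← Finset.sum_sub_distrib]
      refine (norm_sum_le _ _).trans (Finset.sum_le_sum fun j _ => ?_)
      have hle := abs_le.1 (hl r hr)
      by_cases hj : r ∈ Icc (sVec j - δ) (sVec j + δ)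
      · rw [indicator_of_mem hj, abs_norm]
        split_ifs <;> simp
      · have : sVec j ≤ min T (ℓ r) ↔ sVec j ≤ r := by
          rw [le_min_iff]
          rw [mem_Icc, not_and_or, not_le, not_le] at hj
          constructor
          · rintro ⟨_, h⟩
            rcases hj with hj | hj <;> linarith
          · intro h
            refine ⟨hs j, ?_⟩
            rcases hj with hj | hj <;> linarith
        simp [this]
    refine (Real.rpow_le_rpow (norm_nonneg _) h1 hp0.le).trans ?_
    refine (Real.rpow_sum_le_const_mul_sum_rpow _ _ hp).trans (le_of_eq ?_)
    simp only [Finset.card_univ, Fintype.card_fin, Nat.cast_add, Nat.cast_one]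
    congr 1
    refine Finset.sum_congr rfl fun j _ => ?_
    by_cases hj : r ∈ Icc (sVec j - δ) (sVec j + δ)
    · simp [indicator_of_mem hj]
    · simp [indicator_of_notMem hj, hp0.ne']
  have hint : ∀ j, Integrable
      ((Icc (sVec j - δ) (sVec j + δ)).indicator (fun _ => ‖xVec j‖ ^ p))
      (volume.restrict (Ioc 0 T)) := fun j =>
    (integrable_const _).indicator measurableSet_Icc
  rw [pnormPow_eq hT, min_eq_left hlT, sub_self, norm_zero, Real.zero_rpow hp0.ne', zero_add]
  calc _ ≤ ∫ r in Ioc 0 T, ((m : ℝ) + 1) ^ (p - 1) *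
        ∑ j, (Icc (sVec j - δ) (sVec j + δ)).indicator (fun _ => ‖xVec j‖ ^ p) r := by
        refine integral_mono_of_nonneg (Eventually.of_forall fun _ => by positivity)
          ((integrable_finsetSum _ fun j _ => hint j).const_mul _) ?_
        exact (ae_restrict_iff' measurableSet_Ioc).2 (Eventually.of_forall fun r hr =>
          key r ⟨hr.1.le, hr.2⟩)
    _ ≤ _ := by
        rw [integral_const_mul, integral_finsetSum _ fun j _ => hint j, Finset.sum_mul]
        gcongr with j
        rw [integral_indicator measurableSet_Icc, setIntegral_const, smul_eq_mul, mul_comm]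
        gcongr
        calc _ ≤ volume.real (Icc (sVec j - δ) (sVec j + δ)) := by
              rw [measureReal_restrict_apply measurableSet_Icc]
              exact measureReal_mono inter_subset_left (by rw [Real.volume_Icc]; exact ENNReal.ofReal_ne_top)
          _ = 2 * δ := by
              rw [Real.volume_real_Icc_of_le (by linarith)]
              ring

theorem numeric (T : ℝ) (hT : 0 < T) (p : ℝ) (hp : 1 ≤ p) (M : ℝ) (hM : 1 ≤ M) (κ : ℝ)
    (hκ : 0 < κ) : ∃ N : ℕ, 1 ≤ N ∧ ∀ n ≥ N,
      (2 * M / (n : ℝ)) ^ ((3 * p + 3) / 2) ≤ κ ∧ ∃ c > 0,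
      2 ^ p * (((1 + T) * c ^ p + c⁻¹ * (2 * M / (n : ℝ))) +
        ((n : ℝ) ^ (1 + 1 / (5 * p))) ^ (p - 1) *
            ((n : ℝ) ^ (p / 2 + 6 / 5) * (2 * (2 * M / n) ^ ((3 * p + 3) / 2)))) ≤ κ := by
  have hp0 : 0 < p := by linarith
  have hA : Tendsto (fun n : ℕ => 2 * M / (n : ℝ)) atTop (𝓝 0) :=
    tendsto_const_nhds.div_atTop tendsto_natCast_atTop_atTop
  have hA1 : Tendsto (fun n : ℕ => (2 * M / (n : ℝ)) ^ ((3 * p + 3) / 2)) atTop (𝓝 0) := by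
    have := hA.rpow_const (p := (3 * p + 3) / 2) (Or.inr (by positivity))
    rwa [Real.zero_rpow (by positivity)] at this
  have hB : Tendsto (fun n : ℕ => ((n : ℝ) ^ (1 + 1 / (5 * p))) ^ (p - 1) *
      ((n : ℝ) ^ (p / 2 + 6 / 5) * (2 * (2 * M / n) ^ ((3 * p + 3) / 2)))) atTop (𝓝 0) := by
    have h1 : Tendsto (fun n : ℕ => 2 * (2 * M) ^ ((3 * p + 3) / 2) *
        (n : ℝ) ^ (-(11 / 10 + 1 / (5 * p)))) atTop (𝓝 0) := by
      have := ((tendsto_rpow_neg_atTop (y := 11 / 10 + 1 / (5 * p)) (by positivity)).comp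
        tendsto_natCast_atTop_atTop).const_mul (2 * (2 * M) ^ ((3 * p + 3) / 2))
      simpa using this
    refine h1.congr' ?_
    filter_upwards [eventually_gt_atTop 0] with n hn
    have hn0 : 0 < (n : ℝ) := by exact_mod_cast hn
    rw [Real.div_rpow (by positivity) hn0.le, ← Real.rpow_mul hn0.le,
      show -(11 / 10 + 1 / (5 * p)) = (1 + 1 / (5 * p)) * (p - 1) + (p / 2 + 6 / 5)
        - (3 * p + 3) / 2 by field_simp; ring, Real.rpow_sub hn0, Real.rpow_add hn0]
    ring
  set c : ℝ := (κ / (2 * 2 ^ p * (1 + T))) ^ (1 / p) with hc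
  have hc0 : 0 < c := by positivity
  have hcp : 2 ^ p * (1 + T) * c ^ p = κ / 2 := by
    rw [hc, ← Real.rpow_mul (by positivity), one_div_mul_cancel hp0.ne', Real.rpow_one]
    field_simp
  have hC : Tendsto (fun n : ℕ => 2 ^ p * (((1 + T) * c ^ p + c⁻¹ * (2 * M / (n : ℝ))) +
        ((n : ℝ) ^ (1 + 1 / (5 * p))) ^ (p - 1) *
            ((n : ℝ) ^ (p / 2 + 6 / 5) * (2 * (2 * M / n) ^ ((3 * p + 3) / 2))))) atTop
      (𝓝 (κ / 2)) := by
    have := (((hA.const_mul c⁻¹).const_add ((1 + T) * c ^ p)).add hB).const_mul (2 ^ p)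
    rwa [show 2 ^ p * ((1 + T) * c ^ p + c⁻¹ * 0 + 0) = κ / 2 by rw [← hcp]; ring] at this
  obtain ⟨N, hN⟩ := eventually_atTop.1 ((hA1.eventually (gt_mem_nhds hκ)).and
    (hC.eventually (gt_mem_nhds (half_lt_self hκ))))
  refine ⟨max 1 N, le_max_left _ _, fun n hn => ?_⟩
  obtain ⟨h1, h2⟩ := hN n ((le_max_right _ _).trans hn)
  exact ⟨h1.le, c, hc0, h2.le⟩

/-- (Lemma 5.6) `ρ_n := sup |u^{n,λ_i}(T,x) - u^{λ_i}(T,x)| → 0` as `n → ∞`, the sup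
being over all `i ≤ n^{1+1/(5p)}`, all partitions `0 = s_1 < ⋯ < s_i ≤ T`, and all
`x_1,…,x_{i-1},x` with `|x_i|_p ≤ n^{1/2+6/(5p)}`.  Here `i = m+1` and
`u^{λ_i}(T,x)` is any value `L` satisfying `IsExtValue`. -/
theorem stmt6 (T : ℝ) (hT : 0 < T) (d : ℕ) (hd : 1 ≤ d) (p : ℝ) (hp : 1 ≤ p)
    (u : Theta T d → ℝ) (hub : ∃ M : ℝ, ∀ θ : Theta T d, |u θ| ≤ M)
    (ρ : ℝ → ℝ) (hmono : Monotone ρ)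
    (hρ0 : Filter.Tendsto ρ (nhdsWithin 0 (Set.Ioi 0)) (𝓝 0))
    (huc : ∀ θ θ' : Theta T d, |u θ - u θ'| ≤ ρ (dpDist T p θ θ')) :
    ∀ ε > 0, ∃ N : ℕ, ∀ n ≥ N,
    ∀ (m : ℕ) (sVec : Fin (m + 1) → ℝ) (xVec : Fin (m + 1) → E d),
      sVec 0 = 0 → StrictMono sVec → sVec (Fin.last m) ≤ T →
      ((m : ℝ) + 1) ≤ (n : ℝ) ^ ((1 : ℝ) + 1 / (5 * p)) →
      (∑ j, ‖xVec j‖ ^ p) ^ (1 / p) ≤ (n : ℝ) ^ ((1 : ℝ) / 2 + 6 / (5 * p)) →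
    ∀ L : ℝ, IsExtValue T p u (pcPath sVec xVec) L →
      |reg T p u n T (pcPath sVec xVec) - L| ≤ ε := by
  intro ε hε
  obtain ⟨M₀, hM₀⟩ := hub
  obtain ⟨M, hM1, hM⟩ : ∃ M : ℝ, 1 ≤ M ∧ ∀ θ : Theta T d, |u θ| ≤ M :=
    ⟨max 1 M₀, le_max_left _ _, fun θ => (hM₀ θ).trans (le_max_right _ _)⟩
  have hp0 : 0 < p := by linarith
  obtain ⟨κ, hκ, hclose⟩ := close_lemma T hT d p hp u ρ hmono hρ0 huc (ε / 2) (by positivity)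
  obtain ⟨N, hN1, hN⟩ := numeric T hT p hp M hM1 κ hκ
  refine ⟨N, fun n hn m sVec xVec hs0 hsm hsT hm hx L hL => ?_⟩
  have hn0 : 0 < (n : ℝ) := by exact_mod_cast (hN1.trans hn)
  have hLM : |L| ≤ M := by
    obtain ⟨θk, -, -, h3⟩ := hL
    exact le_of_tendsto h3.abs (Eventually.of_forall fun k => hM _)
  have hsj : ∀ j, sVec j ≤ T := fun j => (hsm.monotone (Fin.le_last j)).trans hsT
  set S := { x | ∃ θ : Theta T d, ∃ ℓ : ℝ → ℝ, (θ.t, θ.path) ≠ (0, 0) ∧ ℓ ∈ LL T θ.t T ∧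
        x = u θ - (n : ℝ) * Phi T p T (pcPath sVec xVec) θ ℓ } with hS
  have hreg : reg T p u n T (pcPath sVec xVec) = sSup S := rfl
  have hbdd : BddAbove S := by
    refine ⟨M, ?_⟩
    rintro _ ⟨θ, ℓ, -, -, rfl⟩
    have := mul_nonneg hn0.le (Phi_nonneg hT p T (pcPath sVec xVec) θ ℓ)
    linarith [le_of_abs_le (hM θ)]
  have hmemk : ∀ k, u (rampTheta hT sVec xVec k) - (n : ℝ) *
      pnormPow T (p + 1) (fun r => pcPath sVec xVec r - rampPath sVec xVec k r) ∈ S := by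
    intro k
    refine ⟨rampTheta hT sVec xVec k, fun r => r, ?_, id_mem_LL hT, ?_⟩
    · intro h
      exact hT.ne' (congrArg Prod.fst h)
    · unfold Phi
      have h0 : supId T (fun r => r) = 0 := by simp [supId]
      rw [h0, Real.zero_rpow (by positivity), zero_add]
      congr 2
      refine pnormPow_congr hT _ fun r hr => ?_
      have : min (rampTheta hT sVec xVec k).t r = r := min_eq_right hr.2
      rw [this, min_eq_right hr.2]
      rfl
  rw [hreg, abs_le]
  constructor
  · have e1 : ∀ᶠ k in atTop, pnormPow T (p + 1)
        (fun r => pcPath sVec xVec r - rampPath sVec xVec k r) < ε / 2 / n :=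
      (ramp_conv hT sVec xVec (by linarith)).eventually (gt_mem_nhds (by positivity))
    have e2 : ∀ᶠ k in atTop, pnormPow T p
        (fun r => pcPath sVec xVec r - rampPath sVec xVec k r) < κ :=
      (ramp_conv hT sVec xVec hp0).eventually (gt_mem_nhds hκ)
    obtain ⟨k, h1, h2⟩ := (e1.and e2).exists
    have h3 := le_csSup hbdd (hmemk k)
    have h4 : |u (rampTheta hT sVec xVec k) - L| ≤ ε / 2 := by
      refine hclose _ _ L (pc_nice sVec xVec) hL ?_ ?_
      · have : (rampTheta hT sVec xVec k).t = T := rfl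
        rw [this]
        simpa using hκ.le
      · refine le_trans (le_of_eq ?_) h2.le
        refine pnormPow_congr hT _ fun r hr => ?_
        have : min (rampTheta hT sVec xVec k).t r = r := min_eq_right hr.2
        rw [this, norm_sub_rev]
        rfl
    rw [lt_div_iff₀ hn0] at h1
    have := (abs_le.1 h4).1
    linarith
  · suffices sSup S ≤ L + ε by linarith
    refine csSup_le ⟨_, hmemk 0⟩ ?_
    rintro _ ⟨θ, ℓ, -, hl, rfl⟩
    have hΦ0 := Phi_nonneg hT p T (pcPath sVec xVec) θ ℓ
    have hnΦ := mul_nonneg hn0.le hΦ0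
    rcases lt_or_ge (2 * M / n) (Phi T p T (pcPath sVec xVec) θ ℓ) with hbig | hsm
    · rw [div_lt_iff₀ hn0] at hbig
      have := le_of_abs_le (hM θ)
      have := neg_le_of_abs_le hLM
      linarith
    · obtain ⟨hmon, hlT, htT, hbd⟩ := LL_facts hT θ.ht hl
      have hsup0 := supId_nonneg T ℓ
      set f : ℝ → E d := fun r => pcPath sVec xVec (min T (ℓ r)) - θ.path (min θ.t r) with hf
      have hP0 : 0 ≤ pnormPow T (p + 1) f := pnormPow_nonneg hT _ _
      have hfn : Nice T f := (pc_comp_nice sVec xVec hmon).sub (θ.nice hT)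
      have hPf : pnormPow T (p + 1) f ≤ 2 * M / n := by
        refine le_trans ?_ hsm
        unfold Phi
        have := Real.rpow_nonneg hsup0 (2 / (3 * p + 3))
        linarith
      have hsup : supId T ℓ ≤ (2 * M / n) ^ ((3 * p + 3) / 2) := by
        have h1 : supId T ℓ ^ (2 / (3 * p + 3)) ≤ 2 * M / n := by
          refine le_trans ?_ hsm
          unfold Phi
          linarith
        have h2 := Real.rpow_le_rpow (by positivity) h1 (z := (3 * p + 3) / 2) (by positivity)
        rwa [← Real.rpow_mul hsup0, show 2 / (3 * p + 3) * ((3 * p + 3) / 2) = 1 by field_simp,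
          Real.rpow_one] at h2
      have hSum : ∑ j, ‖xVec j‖ ^ p ≤ (n : ℝ) ^ (p / 2 + 6 / 5) := by
        have h0 : 0 ≤ ∑ j, ‖xVec j‖ ^ p := Finset.sum_nonneg fun j _ => by positivity
        have h2 := Real.rpow_le_rpow (by positivity) hx (z := p) hp0.le
        rwa [← Real.rpow_mul h0, ← Real.rpow_mul hn0.le, one_div_mul_cancel hp0.ne',
          Real.rpow_one, show (1 / 2 + 6 / (5 * p)) * p = p / 2 + 6 / 5 by field_simp] at h2
      have hg := timechange_bound hT hp sVec xVec hsj hsup0 hlT hbd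
      obtain ⟨hN2, c, hc, hN3⟩ := hN n hn
      have hg' : pnormPow T p
          (fun r => pcPath sVec xVec (min T (ℓ r)) - pcPath sVec xVec r) ≤
          ((n : ℝ) ^ (1 + 1 / (5 * p))) ^ (p - 1) *
            ((n : ℝ) ^ (p / 2 + 6 / 5) * (2 * (2 * M / n) ^ ((3 * p + 3) / 2))) := by
        refine hg.trans ?_
        have hp1 : 0 ≤ p - 1 := by linarith
        gcongr
      have hfp := pnormPow_interp hT hp0.le hfn hc
      have htri := pnormPow_tri hT hp0.le
        (h := fun r => θ.path (min θ.t r) - pcPath sVec xVec r) hfn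
        ((pc_comp_nice sVec xVec hmon).sub (pc_nice sVec xVec)) (by
          intro r _
          rw [hf, ← norm_neg (pcPath sVec xVec (min T (ℓ r)) - θ.path (min θ.t r))]
          refine le_trans (le_of_eq ?_) (norm_add_le _ _)
          congr 1
          abel)
      have hfin : |u θ - L| ≤ ε / 2 := by
        refine hclose θ _ L (pc_nice sVec xVec) hL (htT.trans (hsup.trans hN2)) ?_
        refine htri.trans (le_trans ?_ hN3)
        have hfp' : pnormPow T p f ≤ (1 + T) * c ^ p + c⁻¹ * (2 * M / n) := by
          refine hfp.trans ?_
          gcongr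
        gcongr
      have := (abs_le.1 hfin).2
      linarith
end
end
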